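/- Let n ≥ 1, s ∈ (0,1), t ∈ (s,1), and p, p* ∈ (1,∞) satisfy s − n/p* = t − n/p. Then there exists C = C(n,s,t,p) > 0 such that for every measurable, almost everywhere finite f : ℝⁿ → ℝ: (1) [f]_{W^{s,p*}(ℝⁿ)} ≤ C [f]_{W^{t,p}(ℝⁿ)}; (2) ( ∫_{ℝⁿ} ( ∫_{ℝⁿ} |f(x)−f(y)|^p / |x−y|^{n+sp} dy )^{p*/p} dx )^{1/p*} ≤ C [f]_{W^{t,p}(ℝⁿ)}; and for every open ball B ⊆ ℝⁿ and every measurable, almost everywhere finite f : B → ℝ, with the same constant C independent of the ball: (3) [f]_{W^{s,p*}(B)} ≤ C [f]_{W^{t,p}(B)}; (4) ( ∫_B ( ∫_B |f(x)−f(y)|^p / |x−y|^{n+sp} dy )^{p*/p} dx )^{1/p*} ≤ C [f]_{W^{t,p}(B)}. All quantities are interpreted in [0,∞] (the inequalities are trivial when the right-hand side is infinite). -/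

import Mathlib

open MeasureTheory
open scoped ENNReal

noncomputable section

/-- Euclidean space `ℝᵏ`. -/
abbrev Euc (k : ℕ) : Type _ := EuclideanSpace ℝ (Fin k)

/-- The Gagliardo seminorm `[f]_{W^{σ,p}(A)}` of a real-valued function, in `[0,∞]`. -/
def gagliardo (n : ℕ) (σ p : ℝ) (A : Set (Euc n)) (f : Euc n → ℝ) : ℝ≥0∞ :=
  (∫⁻ x in A, ∫⁻ y in A,
      ENNReal.ofReal (|f x - f y| ^ p / ‖x - y‖ ^ ((n : ℝ) + σ * p))) ^ (1 / p)

/-!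
Write `g_a(x) = ∫ |f(x) - f(y)|ᵖ / |x - y|ᵃ dy`. Points `x, y` with `|x - y| = ρ` are compared
through intermediate points `z` whose distance to `x` is about `θρ`. Averaging
`|f(x) - f(y)|ᵖ ≲ |f(x) - f(z)|ᵖ + |f(y) - f(z)|ᵖ` over these `z` and integrating in `y` outside a
ball of radius `r` about `x`, Tonelli turns the first term into a multiple of `g_a(x)` that is small
with `θ`; it is absorbed once `y` is confined to a bounded ball, where `g_a(x)` is finite. Thus
`g_a(x) ≲ rᵇ⁻ᵃ g_b(x) + rᵇ⁻ᵃ⁻ᴺ ∫ g_b` for every `r`, and the best `r` gives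
`g_a^q ≲ (∫ g_b)^(q - 1) g_b` with `q = N / (N - (b - a))`, whence the mixed-norm bound.
Averaging with `θ = 1` and raising to the power `q` bounds the seminorm of exponent `pq` by
`∫ g_a^q`. Only the two-sided bounds for the measure of balls enter, and these pass, with uniform
constants, to every ball of the space.
-/

universe u v

section Kernel

variable {X : Type u} {E : Type v} [PseudoMetricSpace E] {f : X → E} {p a b r : ℝ} {x y : X}

/-- The Gagliardo kernel `|f(x) - f(y)|ᵖ / |x - y|ᵃ` on a metric space. The exponent `a` is kept
free since different powers of the distance are compared; `a = 0` gives the bare difference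
`|f(x) - f(y)|ᵖ`. -/
def gagliardoKernel [PseudoMetricSpace X] (f : X → E) (p a : ℝ) (x y : X) : ℝ≥0∞ :=
  ENNReal.ofReal (dist (f x) (f y) ^ p / dist x y ^ a)

lemma gagliardoKernel_self [PseudoMetricSpace X] (hp : 0 < p) (x : X) :
    gagliardoKernel f p a x x = 0 := by
  simp [gagliardoKernel, Real.zero_rpow hp.ne']

lemma gagliardoKernel_eq_mul [PseudoMetricSpace X] (hxy : 0 < dist x y) :
    gagliardoKernel f p a x y =
      ENNReal.ofReal (dist x y ^ (b - a)) * gagliardoKernel f p b x y := by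
  rw [gagliardoKernel, gagliardoKernel, ← ENNReal.ofReal_mul (by positivity), Real.rpow_sub hxy]
  congr 1
  field_simp

lemma gagliardoKernel_mul_exponent [PseudoMetricSpace X] {q : ℝ} (hq : 0 ≤ q)
    (hxy : 0 < dist x y) :
    gagliardoKernel f (p * q) a x y =
      ENNReal.ofReal (dist x y ^ (-a)) * gagliardoKernel f p 0 x y ^ q := by
  rw [gagliardoKernel_eq_mul (b := 0) hxy, zero_sub, gagliardoKernel, gagliardoKernel,
    Real.rpow_zero, div_one, div_one, ENNReal.ofReal_rpow_of_nonneg (by positivity) hq,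
    Real.rpow_mul dist_nonneg]

lemma gagliardoKernel_zero_le_add [PseudoMetricSpace X] (hp : 0 < p) (x y z : X) :
    gagliardoKernel f p 0 x y ≤
      ENNReal.ofReal (2 ^ p) * (gagliardoKernel f p 0 x z + gagliardoKernel f p 0 y z) := by
  simp only [gagliardoKernel, Real.rpow_zero, div_one]
  rw [← ENNReal.ofReal_add (by positivity) (by positivity), ← ENNReal.ofReal_mul (by positivity)]
  gcongr
  set m := max (dist (f x) (f z)) (dist (f y) (f z)) with hm
  have htri : dist (f x) (f y) ≤ 2 * m := by
    linarith [dist_triangle_right (f x) (f y) (f z),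
      le_max_left (dist (f x) (f z)) (dist (f y) (f z)),
      le_max_right (dist (f x) (f z)) (dist (f y) (f z))]
  have hmax : m ^ p ≤ dist (f x) (f z) ^ p + dist (f y) (f z) ^ p := by
    rcases max_choice (dist (f x) (f z)) (dist (f y) (f z)) with h | h <;> rw [hm, h]
    · exact le_add_of_nonneg_right (by positivity)
    · exact le_add_of_nonneg_left (by positivity)
  calc dist (f x) (f y) ^ p ≤ (2 * m) ^ p := by gcongr
    _ = 2 ^ p * m ^ p := Real.mul_rpow (by norm_num) (by positivity)
    _ ≤ _ := by gcongr

lemma gagliardoKernel_le_of_dist_le [MetricSpace X] (hp : 0 < p) (hab : a ≤ b) (h : dist x y ≤ r) :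
    gagliardoKernel f p a x y ≤ ENNReal.ofReal (r ^ (b - a)) * gagliardoKernel f p b x y := by
  rcases eq_or_ne x y with rfl | hxy
  · simp [gagliardoKernel_self hp]
  rw [gagliardoKernel_eq_mul (b := b) (dist_pos.2 hxy)]
  have : 0 ≤ b - a := sub_nonneg.2 hab
  gcongr

end Kernel

section Density

variable {X : Type u} {E : Type v} [MetricSpace X] [MeasurableSpace X] [PseudoMetricSpace E]
  {μ : Measure X} {f : X → E} {p a b r : ℝ}

/-- The density `x ↦ ∫ |f(x) - f(y)|ᵖ / |x - y|ᵃ dy`, the `p`-th power of the fractional gradient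
`|Dˢf|(x)` when `a = n + sp`. -/
def gagliardoDensity (μ : Measure X) (f : X → E) (p a : ℝ) (x : X) : ℝ≥0∞ :=
  ∫⁻ y, gagliardoKernel f p a x y ∂μ

/-- The Gagliardo seminorm `[f]_{W^{σ,p}}` of a map on an `N`-dimensional metric measure space. -/
def gagliardoSeminorm (μ : Measure X) (N σ p : ℝ) (f : X → E) : ℝ≥0∞ :=
  (∫⁻ x, gagliardoDensity μ f p (N + σ * p) x ∂μ) ^ (1 / p)

lemma setLIntegral_gagliardoKernel_le (hp : 0 < p) (hab : a ≤ b) {S : Set X} (hS : MeasurableSet S)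
    {x : X} (hr : ∀ y ∈ S, dist x y ≤ r) :
    ∫⁻ y in S, gagliardoKernel f p a x y ∂μ ≤
      ENNReal.ofReal (r ^ (b - a)) * ∫⁻ y in S, gagliardoKernel f p b x y ∂μ := by
  rw [← lintegral_const_mul' _ _ ENNReal.ofReal_ne_top]
  exact setLIntegral_mono' hS fun y hy => gagliardoKernel_le_of_dist_le hp hab (hr y hy)

variable [OpensMeasurableSpace X] [SecondCountableTopology X]
  [MeasurableSpace E] [OpensMeasurableSpace E] [SecondCountableTopology E]

lemma measurable_uncurry_gagliardoKernel (hf : Measurable f) :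
    Measurable (Function.uncurry (gagliardoKernel f p a)) := by
  unfold gagliardoKernel Function.uncurry
  fun_prop

lemma measurable_gagliardoKernel_right (hf : Measurable f) (x : X) :
    Measurable (gagliardoKernel f p a x) :=
  (measurable_uncurry_gagliardoKernel hf).of_uncurry_left

lemma measurable_gagliardoDensity [SFinite μ] (hf : Measurable f) :
    Measurable (gagliardoDensity μ f p a) :=
  (measurable_uncurry_gagliardoKernel hf).lintegral_prod_right'

lemma gagliardoKernel_zero_le_setLIntegral (hp : 0 < p) (hf : Measurable f) {S : Set X} {m : ℝ}
    (hm : 0 < m) (hS : ENNReal.ofReal m ≤ μ S) (x y : X) :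
    gagliardoKernel f p 0 x y ≤ ENNReal.ofReal (2 ^ p / m) *
      ((∫⁻ z in S, gagliardoKernel f p 0 x z ∂μ) + ∫⁻ z in S, gagliardoKernel f p 0 y z ∂μ) := by
  have hm' : ENNReal.ofReal m ≠ 0 := by simpa using hm
  rw [ENNReal.ofReal_div_of_pos hm, ← ENNReal.mul_div_right_comm,
    ENNReal.le_div_iff_mul_le (.inl hm') (.inl ENNReal.ofReal_ne_top)]
  calc gagliardoKernel f p 0 x y * ENNReal.ofReal m ≤ gagliardoKernel f p 0 x y * μ S := by gcongr
    _ = ∫⁻ _ in S, gagliardoKernel f p 0 x y ∂μ := (setLIntegral_const _ _).symm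
    _ ≤ ∫⁻ z in S, ENNReal.ofReal (2 ^ p) *
          (gagliardoKernel f p 0 x z + gagliardoKernel f p 0 y z) ∂μ :=
        lintegral_mono fun z => gagliardoKernel_zero_le_add hp x y z
    _ = _ := by
        rw [lintegral_const_mul' _ _ ENNReal.ofReal_ne_top,
          lintegral_add_left (measurable_gagliardoKernel_right hf x)]

end Density

section Tail

variable {X : Type u} {E : Type v} [MetricSpace X] [MeasurableSpace X] [PseudoMetricSpace E]
  {μ : Measure X} {f : X → E} {p a L : ℝ}

/-- The part of the density `gagliardoDensity μ f p a x` coming from the points `z` whose distance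
to `x` is at least `L⁻¹ |x - y|`. -/
def gagliardoTail (μ : Measure X) (f : X → E) (p a L : ℝ) (x y : X) : ℝ≥0∞ :=
  ∫⁻ z in {z | dist x y ≤ L * dist x z}, gagliardoKernel f p a x z ∂μ

variable [OpensMeasurableSpace X] [SecondCountableTopology X]

lemma measurableSet_dist_le_mul_dist (L : ℝ) (x y : X) :
    MeasurableSet {z | dist x y ≤ L * dist x z} :=
  measurableSet_le (by fun_prop) (by fun_prop)

lemma lintegral_setLIntegral_dist_le [SFinite μ] {φ : X → ℝ≥0∞} (hφ : Measurable φ) (L : ℝ)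
    (x : X) :
    ∫⁻ y, ∫⁻ z in {z | dist x y ≤ L * dist x z}, φ z ∂μ ∂μ =
      ∫⁻ z, φ z * μ (Metric.closedBall x (L * dist x z)) ∂μ := by
  have hS : MeasurableSet {w : X × X | dist x w.1 ≤ L * dist x w.2} :=
    measurableSet_le (by fun_prop) (by fun_prop)
  have hball : ∀ z, {y | dist x y ≤ L * dist x z} = Metric.closedBall x (L * dist x z) :=
    fun z => by ext y; rw [Metric.mem_closedBall']; rfl
  calc _ = ∫⁻ y, ∫⁻ z, {w : X × X | dist x w.1 ≤ L * dist x w.2}.indicator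
          (fun w => φ w.2) (y, z) ∂μ ∂μ :=
        lintegral_congr fun y => (lintegral_indicator (measurableSet_dist_le_mul_dist L x y) φ).symm
    _ = ∫⁻ z, ∫⁻ y, {y | dist x y ≤ L * dist x z}.indicator (fun _ => φ z) y ∂μ ∂μ :=
        lintegral_lintegral_swap ((hφ.comp measurable_snd).indicator hS).aemeasurable
    _ = _ := by
        refine lintegral_congr fun z => ?_
        rw [hball, lintegral_indicator_const measurableSet_closedBall]

variable [MeasurableSpace E] [OpensMeasurableSpace E] [SecondCountableTopology E]

lemma measurable_uncurry_gagliardoTail [SFinite μ] (hf : Measurable f) :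
    Measurable (Function.uncurry (gagliardoTail μ f p a L)) := by
  have hS : MeasurableSet {w : (X × X) × X | dist w.1.1 w.1.2 ≤ L * dist w.1.1 w.2} :=
    measurableSet_le (by fun_prop) (by fun_prop)
  have hK : Measurable fun w : (X × X) × X => gagliardoKernel f p a w.1.1 w.2 :=
    (measurable_uncurry_gagliardoKernel hf).comp (by fun_prop : Measurable fun w : (X × X) × X =>
      (w.1.1, w.2))
  convert (hK.indicator hS).lintegral_prod_right' (ν := μ) with w
  exact (lintegral_indicator (measurableSet_dist_le_mul_dist L w.1 w.2) _).symm

lemma lintegral_gagliardoTail_le [SFinite μ] (hp : 0 < p) (hf : Measurable f) {N C : ℝ}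
    (hL : 0 < L) {x : X}
    (hμ : ∀ r, 0 < r → μ (Metric.closedBall x r) ≤ ENNReal.ofReal (C * r ^ N)) :
    ∫⁻ y, gagliardoTail μ f p (a + N) L x y ∂μ ≤
      ENNReal.ofReal (C * L ^ N) * gagliardoDensity μ f p a x := by
  unfold gagliardoTail gagliardoDensity
  rw [lintegral_setLIntegral_dist_le (measurable_gagliardoKernel_right hf x),
    ← lintegral_const_mul' _ _ ENNReal.ofReal_ne_top]
  refine lintegral_mono fun z => ?_
  rcases eq_or_ne x z with rfl | hxz
  · simp [gagliardoKernel_self hp]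
  have hd : 0 < dist x z := dist_pos.2 hxz
  calc gagliardoKernel f p (a + N) x z * μ (Metric.closedBall x (L * dist x z))
      ≤ gagliardoKernel f p (a + N) x z * ENNReal.ofReal (C * (L * dist x z) ^ N) := by
        gcongr
        exact hμ _ (by positivity)
    _ = ENNReal.ofReal (C * L ^ N) *
          (ENNReal.ofReal (dist x z ^ (a + N - a)) * gagliardoKernel f p (a + N) x z) := by
        rw [← mul_assoc, ← ENNReal.ofReal_mul' (by positivity), mul_comm, add_sub_cancel_left,
          Real.mul_rpow hL.le hd.le, mul_assoc]
    _ = _ := by rw [← gagliardoKernel_eq_mul hd]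

end Tail

section Optimization

lemma rpow_sub_one_mul_self {q : ℝ} (hq : 1 ≤ q) (x : ℝ≥0∞) : x ^ (q - 1) * x = x ^ q := by
  conv_lhs => rw [← ENNReal.rpow_one x, ← ENNReal.rpow_mul, one_mul]
  rw [← ENNReal.rpow_add_of_nonneg _ _ (sub_nonneg.2 hq) zero_le_one, sub_add_cancel]

lemma exists_rpow_add_rpow_sub_eq {u v e N : ℝ} (hu : 0 < u) (hv : 0 < v) (he : 0 < e)
    (heN : e < N) :
    ∃ r, 0 < r ∧ (r ^ e * u + r ^ (e - N) * v) ^ (N / (N - e)) =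
      2 ^ (N / (N - e)) * v ^ (N / (N - e) - 1) * u := by
  have hN : 0 < N := he.trans heN
  have hNe : N - e ≠ 0 := (sub_pos.2 heN).ne'
  refine ⟨(v / u) ^ (1 / N), by positivity, ?_⟩
  have hnear : ((v / u) ^ (1 / N)) ^ e * u = v ^ (e / N) * u ^ (1 - e / N) := by
    rw [← Real.rpow_mul (by positivity), Real.div_rpow hv.le hu.le, Real.rpow_sub hu,
      Real.rpow_one, one_div_mul_eq_div]
    field_simp
  have hfar : ((v / u) ^ (1 / N)) ^ (e - N) * v = v ^ (e / N) * u ^ (1 - e / N) := by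
    rw [← Real.rpow_mul (by positivity), show 1 / N * (e - N) = e / N - 1 by field_simp,
      Real.div_rpow hv.le hu.le, Real.rpow_sub hv, Real.rpow_sub hu, Real.rpow_sub hu,
      Real.rpow_one, Real.rpow_one]
    field_simp
  have hexp_v : e / N * (N / (N - e)) = N / (N - e) - 1 := by field_simp; ring
  have hexp_u : (1 - e / N) * (N / (N - e)) = 1 := by field_simp
  rw [hnear, hfar, ← two_mul, Real.mul_rpow (by norm_num) (by positivity),
    Real.mul_rpow (by positivity) (by positivity), ← Real.rpow_mul hv.le, ← Real.rpow_mul hu.le,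
    hexp_v, hexp_u, Real.rpow_one, mul_assoc]

lemma rpow_le_ofReal_of_forall_le {H : ℝ≥0∞} {u v K e N : ℝ} (hu : 0 < u) (hv : 0 < v)
    (hK : 0 < K) (he : 0 < e) (heN : e < N)
    (h : ∀ r : ℝ, 0 < r → H ≤ ENNReal.ofReal (K * (r ^ e * u + r ^ (e - N) * v))) :
    H ^ (N / (N - e)) ≤
      ENNReal.ofReal ((2 * K) ^ (N / (N - e)) * v ^ (N / (N - e) - 1) * u) := by
  have hq : 0 ≤ N / (N - e) := div_nonneg (he.trans heN).le (sub_pos.2 heN).le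
  obtain ⟨r, hr, hopt⟩ := exists_rpow_add_rpow_sub_eq hu hv he heN
  calc H ^ (N / (N - e))
      ≤ ENNReal.ofReal (K * (r ^ e * u + r ^ (e - N) * v)) ^ (N / (N - e)) := by
        gcongr
        exact h r hr
    _ = ENNReal.ofReal (K ^ (N / (N - e)) * (r ^ e * u + r ^ (e - N) * v) ^ (N / (N - e))) := by
        rw [ENNReal.ofReal_rpow_of_nonneg (by positivity) hq, Real.mul_rpow hK.le (by positivity)]
    _ = _ := by
        rw [hopt, Real.mul_rpow (by norm_num) hK.le]
        ring_nf

lemma rpow_le_of_forall_le_rpow_add_rpow_sub {H g G : ℝ≥0∞} {K e N : ℝ} (hK : 0 < K) (he : 0 < e)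
    (heN : e < N) (hg : g ≠ ⊤) (hG : G ≠ ⊤)
    (h : ∀ r : ℝ, 0 < r → H ≤ ENNReal.ofReal K *
      (ENNReal.ofReal (r ^ e) * g + ENNReal.ofReal (r ^ (e - N)) * G)) :
    H ^ (N / (N - e)) ≤
      ENNReal.ofReal ((2 * K) ^ (N / (N - e))) * G ^ (N / (N - e) - 1) * g := by
  have hq : 0 < N / (N - e) - 1 := sub_pos.2 ((one_lt_div (sub_pos.2 heN)).2 (by linarith))
  lift g to NNReal using hg
  lift G to NNReal using hG
  have hbound : ∀ δ : ℝ, 0 < δ → H ^ (N / (N - e)) ≤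
      ENNReal.ofReal ((2 * K) ^ (N / (N - e)) * (G + δ) ^ (N / (N - e) - 1) * (g + δ)) := by
    intro δ hδ
    have hadd : ∀ w : NNReal, (w : ℝ≥0∞) ≤ ENNReal.ofReal (w + δ) := fun w =>
      (ENNReal.ofReal_coe_nnreal (p := w)).symm.le.trans
        (ENNReal.ofReal_le_ofReal (le_add_of_nonneg_right hδ.le))
    refine rpow_le_ofReal_of_forall_le (by positivity) (by positivity) hK he heN fun r hr => ?_
    rw [ENNReal.ofReal_mul hK.le, ENNReal.ofReal_add (by positivity) (by positivity),
      ENNReal.ofReal_mul (by positivity), ENNReal.ofReal_mul (by positivity)]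
    exact (h r hr).trans (by gcongr <;> exact hadd _)
  have hcont : Continuous fun δ : ℝ => ENNReal.ofReal
      ((2 * K) ^ (N / (N - e)) * ((G : ℝ) + δ) ^ (N / (N - e) - 1) * (g + δ)) := by
    have : Continuous fun δ : ℝ => ((G : ℝ) + δ) ^ (N / (N - e) - 1) :=
      (by fun_prop : Continuous fun δ : ℝ => (G : ℝ) + δ).rpow_const fun _ => .inr hq.le
    exact ENNReal.continuous_ofReal.comp (by fun_prop)
  have hle := ge_of_tendsto ((hcont.tendsto 0).mono_left nhdsWithin_le_nhds)
    (eventually_mem_nhdsWithin.mono fun δ (hδ : δ ∈ Set.Ioi 0) => hbound δ hδ)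
  rwa [add_zero, add_zero, ENNReal.ofReal_mul (by positivity), ENNReal.ofReal_mul (by positivity),
    ← ENNReal.ofReal_rpow_of_nonneg G.coe_nonneg hq.le, ENNReal.ofReal_coe_nnreal,
    ENNReal.ofReal_coe_nnreal] at hle

end Optimization

section MiddleRegion

variable {X : Type u} [PseudoMetricSpace X] {ε l : ℝ} {x y z : X}

/-- The points of the ball of radius `l` about `x` that stay `ε l` away from both `x` and `y`. They
serve as intermediate points between `x` and `y`. -/
def middleRegion (ε : ℝ) (x y : X) (l : ℝ) : Set X :=
  Metric.ball x l \ (Metric.closedBall x (ε * l) ∪ Metric.closedBall y (ε * l))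

lemma dist_le_of_mem_middleRegion (hz : z ∈ middleRegion ε x y l) : dist x z ≤ l :=
  (Metric.mem_ball'.1 hz.1).le

lemma dist_le_add_of_mem_middleRegion (hz : z ∈ middleRegion ε x y l) :
    dist y z ≤ dist x y + l :=
  (dist_triangle_left y z x).trans (by gcongr; exact dist_le_of_mem_middleRegion hz)

lemma mul_le_dist_left_of_mem_middleRegion (hz : z ∈ middleRegion ε x y l) :
    ε * l ≤ dist x z :=
  (not_le.1 fun h => hz.2 (.inl (Metric.mem_closedBall'.2 h))).le

lemma mul_le_dist_right_of_mem_middleRegion (hz : z ∈ middleRegion ε x y l) :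
    ε * l ≤ dist y z :=
  (not_le.1 fun h => hz.2 (.inr (Metric.mem_closedBall'.2 h))).le

lemma measurableSet_middleRegion [MeasurableSpace X] [OpensMeasurableSpace X] (ε : ℝ) (x y : X)
    (l : ℝ) :
    MeasurableSet (middleRegion ε x y l) :=
  measurableSet_ball.diff (measurableSet_closedBall.union measurableSet_closedBall)

end MiddleRegion

section Regularity

variable {X : Type u} [MetricSpace X] [MeasurableSpace X] {μ : Measure X} {N c C ε l : ℝ}

/-- Ahlfors `N`-regularity of a measure, with explicit constants: balls of radius `r` have measure
between `c rᴺ` and `C rᴺ`, the lower bound being required only for radii up to the diameter of the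
space. -/
structure IsAhlforsRegular (μ : Measure X) (N c C : ℝ) : Prop where
  measure_closedBall_le : ∀ x r, 0 < r → μ (Metric.closedBall x r) ≤ ENNReal.ofReal (C * r ^ N)
  le_measure_ball : ∀ x r, 0 < r → ENNReal.ofReal r ≤ Metric.ediam (Set.univ : Set X) →
    ENNReal.ofReal (c * r ^ N) ≤ μ (Metric.ball x r)

lemma IsAhlforsRegular.isLocallyFiniteMeasure (hμ : IsAhlforsRegular μ N c C) :
    IsLocallyFiniteMeasure μ :=
  ⟨fun x => ⟨Metric.closedBall x 1, Metric.closedBall_mem_nhds x one_pos,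
    (hμ.measure_closedBall_le x 1 one_pos).trans_lt ENNReal.ofReal_lt_top⟩⟩

lemma IsAhlforsRegular.le_measure_middleRegion (hμ : IsAhlforsRegular μ N c C) (hc : 0 < c)
    (hε : 0 < ε) (hεc : 4 * C * ε ^ N ≤ c) {x y : X} (hl : 0 < l) (hlxy : l ≤ dist x y) :
    ENNReal.ofReal (c / 2 * l ^ N) ≤ μ (middleRegion ε x y l) := by
  have hball : ENNReal.ofReal (c * l ^ N) ≤ μ (Metric.ball x l) :=
    hμ.le_measure_ball x l hl <| (ENNReal.ofReal_le_ofReal hlxy).trans <|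
      (edist_dist x y).symm.le.trans <|
        Metric.edist_le_ediam_of_mem (Set.mem_univ x) (Set.mem_univ y)
  have hsmall : ∀ w, μ (Metric.closedBall w (ε * l)) ≤ ENNReal.ofReal (c / 4 * l ^ N) := fun w =>
    (hμ.measure_closedBall_le w _ (by positivity)).trans <| ENNReal.ofReal_le_ofReal <| by
      rw [Real.mul_rpow hε.le hl.le, ← mul_assoc]
      gcongr
      linarith
  calc ENNReal.ofReal (c / 2 * l ^ N)
      = ENNReal.ofReal (c * l ^ N) -
          (ENNReal.ofReal (c / 4 * l ^ N) + ENNReal.ofReal (c / 4 * l ^ N)) := by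
        rw [← ENNReal.ofReal_add (by positivity) (by positivity),
          ← ENNReal.ofReal_sub _ (by positivity)]
        ring_nf
    _ ≤ μ (Metric.ball x l) -
          μ (Metric.closedBall x (ε * l) ∪ Metric.closedBall y (ε * l)) := by
        gcongr
        exact (measure_union_le _ _).trans (add_le_add (hsmall x) (hsmall y))
    _ ≤ μ (middleRegion ε x y l) := le_measure_sdiff

/-- The constant in the bound of `|f(x) - f(y)|ᵖ` by averages over a middle region, which fills at
least half of a ball of measure `c lᴺ`. -/
def averagingConst (c p : ℝ) : ℝ :=
  2 ^ (p + 1) / c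

lemma averagingConst_pos (hc : 0 < c) (p : ℝ) : 0 < averagingConst c p := by
  unfold averagingConst
  positivity

variable {E : Type v} [PseudoMetricSpace E] {f : X → E} {p a b θ T : ℝ}

lemma setLIntegral_middleRegion_le_tail [OpensMeasurableSpace X] (hp : 0 < p) (haN : 0 ≤ a + N)
    (hε : 0 < ε) (hθ : 0 < θ) (hθ' : θ ≤ 1) {x y : X} (hT : dist x y ≤ T) :
    ∫⁻ z in middleRegion ε x y (θ * dist x y), gagliardoKernel f p 0 x z ∂μ ≤
      ENNReal.ofReal ((θ * dist x y) ^ (a + N)) *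
        gagliardoTail (μ.restrict (Metric.closedBall x T)) f p (a + N) (ε * θ)⁻¹ x y := by
  refine (setLIntegral_gagliardoKernel_le hp haN (measurableSet_middleRegion _ x y _)
    fun z hz => dist_le_of_mem_middleRegion hz).trans ?_
  rw [sub_zero, gagliardoTail, Measure.restrict_restrict' measurableSet_closedBall]
  gcongr
  refine fun z hz => ⟨?_, ?_⟩
  · have := mul_le_dist_left_of_mem_middleRegion hz
    rw [Set.mem_ofPred_eq, inv_mul_eq_div, le_div_iff₀ (by positivity)]
    linarith
  · rw [Metric.mem_closedBall']
    exact (dist_le_of_mem_middleRegion hz).trans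
      ((mul_le_of_le_one_left dist_nonneg hθ').trans hT)

lemma setLIntegral_middleRegion_le_density [OpensMeasurableSpace X] (hp : 0 < p) (hb : 0 ≤ b)
    (hθ' : θ ≤ 1) (x y : X) :
    ∫⁻ z in middleRegion ε x y (θ * dist x y), gagliardoKernel f p 0 y z ∂μ ≤
      ENNReal.ofReal ((2 * dist x y) ^ b) * gagliardoDensity μ f p b y := by
  have hdist : ∀ z ∈ middleRegion ε x y (θ * dist x y), dist y z ≤ 2 * dist x y := fun z hz =>
    (dist_le_add_of_mem_middleRegion hz).trans
      (by linarith [mul_le_of_le_one_left (dist_nonneg (x := x) (y := y)) hθ'])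
  refine (setLIntegral_gagliardoKernel_le hp hb (measurableSet_middleRegion _ x y _) hdist).trans ?_
  rw [sub_zero]
  gcongr
  exact setLIntegral_le_lintegral _ _

variable [OpensMeasurableSpace X] [SecondCountableTopology X]
  [MeasurableSpace E] [OpensMeasurableSpace E] [SecondCountableTopology E]

lemma IsAhlforsRegular.gagliardoKernel_zero_le (hμ : IsAhlforsRegular μ N c C) (hc : 0 < c)
    (hε : 0 < ε) (hεc : 4 * C * ε ^ N ≤ c) (hp : 0 < p) (hf : Measurable f) {x y : X} (hl : 0 < l)
    (hlxy : l ≤ dist x y) :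
    gagliardoKernel f p 0 x y ≤ ENNReal.ofReal (averagingConst c p * l ^ (-N)) *
      ((∫⁻ z in middleRegion ε x y l, gagliardoKernel f p 0 x z ∂μ) +
        ∫⁻ z in middleRegion ε x y l, gagliardoKernel f p 0 y z ∂μ) := by
  have hconst : 2 ^ p / (c / 2 * l ^ N) = averagingConst c p * l ^ (-N) := by
    rw [averagingConst, Real.rpow_add_one two_ne_zero, Real.rpow_neg hl.le]
    field_simp
  rw [← hconst]
  exact gagliardoKernel_zero_le_setLIntegral hp hf (by positivity)
    (hμ.le_measure_middleRegion hc hε hεc hl hlxy) x y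

lemma IsAhlforsRegular.gagliardoKernel_le_tail_add_density (hμ : IsAhlforsRegular μ N c C)
    (hc : 0 < c) (hε : 0 < ε) (hεc : 4 * C * ε ^ N ≤ c) (hθ : 0 < θ) (hθ' : θ ≤ 1) (hp : 0 < p)
    (haN : 0 ≤ a + N) (hb : 0 ≤ b) (hf : Measurable f) {x y : X} (hxy : x ≠ y)
    (hT : dist x y ≤ T) :
    gagliardoKernel f p a x y ≤
      ENNReal.ofReal (averagingConst c p * θ ^ a) *
          gagliardoTail (μ.restrict (Metric.closedBall x T)) f p (a + N) (ε * θ)⁻¹ x y +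
        ENNReal.ofReal (averagingConst c p * θ ^ (-N) * 2 ^ b * dist x y ^ (b - a - N)) *
          gagliardoDensity μ f p b y := by
  have hκ : 0 < averagingConst c p := averagingConst_pos hc p
  have hρ : 0 < dist x y := dist_pos.2 hxy
  have hnear := setLIntegral_middleRegion_le_tail (f := f) (μ := μ) hp haN hε hθ hθ' hT
  have hfar := setLIntegral_middleRegion_le_density (f := f) (μ := μ) (ε := ε) hp hb hθ' x y
  have hzero := hμ.gagliardoKernel_zero_le hc hε hεc hp hf (mul_pos hθ hρ)
    (mul_le_of_le_one_left hρ.le hθ')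
  rw [gagliardoKernel_eq_mul (b := 0) hρ, zero_sub]
  refine (mul_le_mul_right (hzero.trans (mul_le_mul_right (add_le_add hnear hfar) _)) _).trans ?_
  simp only [mul_add, ← mul_assoc]
  rw [← ENNReal.ofReal_mul (by positivity), ← ENNReal.ofReal_mul (by positivity),
    ← ENNReal.ofReal_mul (by positivity)]
  have hcoeff_tail : dist x y ^ (-a) * (averagingConst c p * (θ * dist x y) ^ (-N)) *
      (θ * dist x y) ^ (a + N) = averagingConst c p * θ ^ a := by
    rw [Real.rpow_add (by positivity), Real.rpow_neg (by positivity), Real.rpow_neg (by positivity),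
      Real.mul_rpow hθ.le hρ.le, Real.mul_rpow hθ.le hρ.le]
    field_simp
  have hcoeff_density : dist x y ^ (-a) * (averagingConst c p * (θ * dist x y) ^ (-N)) *
      (2 * dist x y) ^ b = averagingConst c p * θ ^ (-N) * 2 ^ b * dist x y ^ (b - a - N) := by
    rw [Real.mul_rpow hθ.le hρ.le, Real.mul_rpow two_pos.le hρ.le, Real.rpow_sub hρ,
      Real.rpow_sub hρ, Real.rpow_neg hρ.le, Real.rpow_neg hρ.le]
    field_simp
  rw [hcoeff_tail, hcoeff_density]

end Regularity

section Absorption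

/-- Scales for which intermediate points are plentiful (`ε`) and the tail contributed by chaining
through them at scale `θ |x - y|` is at most half of the density (`absorb`). -/
structure AdmissibleScales (N c C p a ε θ : ℝ) : Prop where
  ε_pos : 0 < ε
  θ_pos : 0 < θ
  θ_le_one : θ ≤ 1
  middle : 4 * C * ε ^ N ≤ c
  absorb : averagingConst c p * θ ^ a * (C * (ε * θ)⁻¹ ^ N) ≤ 2⁻¹

lemma exists_mul_rpow_le {K e δ : ℝ} (hK : 0 < K) (he : 0 < e) (hδ : 0 < δ) :
    ∃ θ, 0 < θ ∧ θ ≤ 1 ∧ K * θ ^ e ≤ δ := by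
  refine ⟨min 1 ((δ / K) ^ e⁻¹), by positivity, min_le_left _ _, ?_⟩
  calc K * min 1 ((δ / K) ^ e⁻¹) ^ e ≤ K * ((δ / K) ^ e⁻¹) ^ e := by
        gcongr
        exact min_le_right _ _
    _ = δ := by
        rw [Real.rpow_inv_rpow (by positivity) he.ne']
        field_simp

lemma exists_admissibleScales {N c C p a : ℝ} (hN : 0 < N) (hc : 0 < c) (hC : 0 < C)
    (haN : N < a) : ∃ ε θ, AdmissibleScales N c C p a ε θ := by
  have hκ : 0 < averagingConst c p := averagingConst_pos hc p
  obtain ⟨ε, hε, -, hεc⟩ := exists_mul_rpow_le (mul_pos four_pos hC) hN hc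
  obtain ⟨θ, hθ, hθ', hθa⟩ := exists_mul_rpow_le
    (by positivity : 0 < averagingConst c p * C * ε⁻¹ ^ N) (sub_pos.2 haN)
    (by norm_num : (0 : ℝ) < 2⁻¹)
  refine ⟨ε, θ, hε, hθ, hθ', hεc, le_of_eq_of_le ?_ hθa⟩
  rw [mul_inv, Real.mul_rpow (by positivity) (by positivity), Real.inv_rpow hθ.le,
    Real.rpow_sub hθ]
  field_simp

/-- The constant `1 + κ θ⁻ᴺ 2ᵇ`, with `κ = averagingConst c p`, of the estimate of the density before
absorption, doubled by the absorption. -/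
def absorptionConst (N c p b θ : ℝ) : ℝ :=
  2 * (1 + averagingConst c p * θ ^ (-N) * 2 ^ b)

lemma le_two_mul_of_le_inv_two_mul_add {H R : ℝ≥0∞} (hH : H ≠ ⊤) (h : H ≤ 2⁻¹ * H + R) :
    H ≤ 2 * R := by
  have hhalf : 2⁻¹ * H + 2⁻¹ * H = H := by
    rw [← add_mul, ENNReal.inv_two_add_inv_two, one_mul]
  have hle : 2⁻¹ * H ≤ R :=
    (ENNReal.add_le_add_iff_left (ENNReal.mul_ne_top (by simp) hH)).1 (hhalf.le.trans h)
  calc H = 2 * (2⁻¹ * H) := by rw [two_mul, hhalf]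
    _ ≤ 2 * R := by gcongr

variable {X : Type u} {E : Type v} [MetricSpace X] [MeasurableSpace X] [PseudoMetricSpace E]
  {μ : Measure X} {f : X → E} {N c C p a b ε θ r T : ℝ}

lemma gagliardoDensity_le_of_forall_restrict_closedBall_le {x : X} {R : ℝ≥0∞}
    (h : ∀ T, gagliardoDensity (μ.restrict (Metric.closedBall x T)) f p a x ≤ R) :
    gagliardoDensity μ f p a x ≤ R := by
  have hmono : Monotone fun n : ℕ => Metric.closedBall x (n : ℝ) :=
    fun m n hmn => Metric.closedBall_subset_closedBall (by exact_mod_cast hmn)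
  rw [gagliardoDensity, ← setLIntegral_univ, ← Metric.iUnion_closedBall_nat x,
    setLIntegral_iUnion_of_directed _ hmono.directed_le]
  exact iSup_le fun n => h n

variable [OpensMeasurableSpace X]

lemma gagliardoDensity_restrict_closedBall_le (hp : 0 < p) (hab : a ≤ b) (x : X) (r : ℝ) :
    gagliardoDensity (μ.restrict (Metric.closedBall x r)) f p a x ≤
      ENNReal.ofReal (r ^ (b - a)) * gagliardoDensity μ f p b x := by
  refine (setLIntegral_gagliardoKernel_le hp hab measurableSet_closedBall
    fun y hy => Metric.mem_closedBall'.1 hy).trans ?_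
  gcongr
  exact setLIntegral_le_lintegral _ _

variable [SecondCountableTopology X]
  [MeasurableSpace E] [OpensMeasurableSpace E] [SecondCountableTopology E]

lemma IsAhlforsRegular.lintegral_gagliardoTail_le_half (hμ : IsAhlforsRegular μ N c C)
    (hc : 0 < c) (hscale : AdmissibleScales N c C p a ε θ) (hp : 0 < p) (hf : Measurable f)
    {ν : Measure X} [SFinite ν] (hν : ν ≤ μ) (x : X) :
    ENNReal.ofReal (averagingConst c p * θ ^ a) *
      ∫⁻ y, gagliardoTail ν f p (a + N) (ε * θ)⁻¹ x y ∂ν ≤ 2⁻¹ * gagliardoDensity ν f p a x := by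
  have hκ : 0 < averagingConst c p := averagingConst_pos hc p
  have hε := hscale.ε_pos
  have hθ := hscale.θ_pos
  grw [lintegral_gagliardoTail_le hp hf (by positivity)
      fun s hs => (hν _).trans (hμ.measure_closedBall_le x s hs),
    ← mul_assoc, ← ENNReal.ofReal_mul (by positivity), hscale.absorb,
    ENNReal.ofReal_inv_of_pos two_pos, ENNReal.ofReal_ofNat]

lemma IsAhlforsRegular.setLIntegral_closedBall_diff_le [SFinite μ] (hμ : IsAhlforsRegular μ N c C)
    (hc : 0 < c) (hscale : AdmissibleScales N c C p a ε θ) (hp : 0 < p) (hb : 0 ≤ b)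
    (haN : 0 ≤ a + N) (hbaN : b - a ≤ N) (hf : Measurable f) (hr : 0 < r) (x : X) :
    ∫⁻ y in Metric.closedBall x T \ Metric.closedBall x r, gagliardoKernel f p a x y ∂μ ≤
      2⁻¹ * gagliardoDensity (μ.restrict (Metric.closedBall x T)) f p a x +
        ENNReal.ofReal (averagingConst c p * θ ^ (-N) * 2 ^ b * r ^ (b - a - N)) *
          ∫⁻ y, gagliardoDensity μ f p b y ∂μ := by
  have hκ : 0 < averagingConst c p := averagingConst_pos hc p
  have hε := hscale.ε_pos
  have hθ := hscale.θ_pos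
  set ν := μ.restrict (Metric.closedBall x T)
  set M := ENNReal.ofReal (averagingConst c p * θ ^ (-N) * 2 ^ b * r ^ (b - a - N))
  have hpoint : ∀ y ∈ Metric.closedBall x T \ Metric.closedBall x r, gagliardoKernel f p a x y ≤
      ENNReal.ofReal (averagingConst c p * θ ^ a) * gagliardoTail ν f p (a + N) (ε * θ)⁻¹ x y +
        M * gagliardoDensity μ f p b y := by
    intro y hy
    have hry : r ≤ dist x y := (not_le.1 fun h => hy.2 (Metric.mem_closedBall'.2 h)).le
    refine (hμ.gagliardoKernel_le_tail_add_density hc hε hscale.middle hθ hscale.θ_le_one hp haN hb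
      hf (dist_pos.1 (hr.trans_le hry)) (Metric.mem_closedBall'.1 hy.1)).trans ?_
    gcongr
    exact ENNReal.ofReal_le_ofReal (mul_le_mul_of_nonneg_left
      (Real.rpow_le_rpow_of_nonpos hr hry (by linarith)) (by positivity))
  have htail := hμ.lintegral_gagliardoTail_le_half hc hscale hp hf
    (Measure.restrict_le_self : ν ≤ μ) x
  calc _ ≤ ∫⁻ y in Metric.closedBall x T \ Metric.closedBall x r,
        (ENNReal.ofReal (averagingConst c p * θ ^ a) * gagliardoTail ν f p (a + N) (ε * θ)⁻¹ x y +
          M * gagliardoDensity μ f p b y) ∂μ :=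
        setLIntegral_mono' (measurableSet_closedBall.diff measurableSet_closedBall) hpoint
    _ ≤ ∫⁻ y, (ENNReal.ofReal (averagingConst c p * θ ^ a) *
          gagliardoTail ν f p (a + N) (ε * θ)⁻¹ x y + M * gagliardoDensity μ f p b y) ∂ν :=
        lintegral_mono_set Set.sdiff_subset
    _ = ENNReal.ofReal (averagingConst c p * θ ^ a) *
          ∫⁻ y, gagliardoTail ν f p (a + N) (ε * θ)⁻¹ x y ∂ν +
          M * ∫⁻ y, gagliardoDensity μ f p b y ∂ν := by
        rw [lintegral_add_right _ ((measurable_gagliardoDensity hf).const_mul _),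
          lintegral_const_mul' _ _ ENNReal.ofReal_ne_top,
          lintegral_const_mul' _ _ ENNReal.ofReal_ne_top]
    _ ≤ _ := by
        gcongr
        exact Measure.restrict_le_self

lemma IsAhlforsRegular.gagliardoDensity_le [SFinite μ] (hμ : IsAhlforsRegular μ N c C)
    (hc : 0 < c) (hscale : AdmissibleScales N c C p a ε θ) (hp : 0 < p) (hb : 0 ≤ b)
    (haN : 0 ≤ a + N) (hab : a ≤ b) (hbaN : b - a ≤ N) (hf : Measurable f) {x : X}
    (hx : gagliardoDensity μ f p b x ≠ ⊤) (hr : 0 < r) :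
    gagliardoDensity μ f p a x ≤ ENNReal.ofReal (absorptionConst N c p b θ) *
      (ENNReal.ofReal (r ^ (b - a)) * gagliardoDensity μ f p b x +
        ENNReal.ofReal (r ^ (b - a - N)) * ∫⁻ y, gagliardoDensity μ f p b y ∂μ) := by
  have hκ : 0 < averagingConst c p := averagingConst_pos hc p
  have hθ := hscale.θ_pos
  set D := averagingConst c p * θ ^ (-N) * 2 ^ b with hD
  have hDpos : 0 < D := by positivity
  set g := gagliardoDensity μ f p b x
  set G := ∫⁻ y, gagliardoDensity μ f p b y ∂μ
  refine gagliardoDensity_le_of_forall_restrict_closedBall_le fun T => ?_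
  set H := gagliardoDensity (μ.restrict (Metric.closedBall x T)) f p a x
  have hfin : H ≠ ⊤ := ne_top_of_le_ne_top (ENNReal.mul_ne_top ENNReal.ofReal_ne_top hx)
    (gagliardoDensity_restrict_closedBall_le hp hab x T)
  have hsplit : H ≤ 2⁻¹ * H + (ENNReal.ofReal (r ^ (b - a)) * g +
      ENNReal.ofReal (D * r ^ (b - a - N)) * G) := by
    calc H ≤ gagliardoDensity (μ.restrict (Metric.closedBall x r)) f p a x +
          ∫⁻ y in Metric.closedBall x T \ Metric.closedBall x r, gagliardoKernel f p a x y ∂μ :=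
          (lintegral_mono_set (by rw [Set.union_sdiff_self]; exact Set.subset_union_right)).trans
            (lintegral_union_le _ _ _)
      _ ≤ _ := add_le_add (gagliardoDensity_restrict_closedBall_le hp hab x r)
          (hμ.setLIntegral_closedBall_diff_le hc hscale hp hb haN hbaN hf hr x)
      _ = _ := by rw [hD]; ring
  calc H ≤ 2 * (ENNReal.ofReal (r ^ (b - a)) * g + ENNReal.ofReal (D * r ^ (b - a - N)) * G) :=
        le_two_mul_of_le_inv_two_mul_add hfin hsplit
    _ = 2 * (1 * (ENNReal.ofReal (r ^ (b - a)) * g) +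
          ENNReal.ofReal D * (ENNReal.ofReal (r ^ (b - a - N)) * G)) := by
        rw [one_mul, ENNReal.ofReal_mul hDpos.le, mul_assoc]
    _ ≤ 2 * (ENNReal.ofReal (1 + D) * (ENNReal.ofReal (r ^ (b - a)) * g) +
          ENNReal.ofReal (1 + D) * (ENNReal.ofReal (r ^ (b - a - N)) * G)) := by
        gcongr
        · exact ENNReal.one_le_ofReal.2 (le_add_of_nonneg_right hDpos.le)
        · exact le_add_of_nonneg_left zero_le_one
    _ = _ := by
        rw [absorptionConst, ENNReal.ofReal_mul two_pos.le, ENNReal.ofReal_ofNat]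
        ring

lemma IsAhlforsRegular.lintegral_gagliardoDensity_rpow_le [SFinite μ]
    (hμ : IsAhlforsRegular μ N c C) (hc : 0 < c) (hscale : AdmissibleScales N c C p a ε θ)
    (hp : 0 < p) (hb : 0 ≤ b) (haN : 0 ≤ a + N) (hab : a < b) (hbaN : b - a < N)
    (hf : Measurable f) :
    ∫⁻ x, gagliardoDensity μ f p a x ^ (N / (N - (b - a))) ∂μ ≤
      ENNReal.ofReal ((2 * absorptionConst N c p b θ) ^ (N / (N - (b - a)))) *
        (∫⁻ x, gagliardoDensity μ f p b x ∂μ) ^ (N / (N - (b - a))) := by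
  have hκ : 0 < averagingConst c p := averagingConst_pos hc p
  have hθ := hscale.θ_pos
  have hK : 0 < absorptionConst N c p b θ := by unfold absorptionConst; positivity
  have hq : 1 < N / (N - (b - a)) := (one_lt_div (by linarith)).2 (by linarith)
  set q := N / (N - (b - a))
  set G := ∫⁻ x, gagliardoDensity μ f p b x ∂μ with hGdef
  rcases eq_or_ne G ⊤ with hG | hG
  · rw [hG, ENNReal.top_rpow_of_pos (by linarith), ENNReal.mul_top (by positivity)]
    exact le_top
  have hpoint : ∀ᵐ x ∂μ, gagliardoDensity μ f p a x ^ q ≤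
      ENNReal.ofReal ((2 * absorptionConst N c p b θ) ^ q) * G ^ (q - 1) *
        gagliardoDensity μ f p b x := by
    filter_upwards [ae_lt_top (measurable_gagliardoDensity hf) hG] with x hx
    exact rpow_le_of_forall_le_rpow_add_rpow_sub hK (sub_pos.2 hab) hbaN hx.ne hG fun r hr =>
      hμ.gagliardoDensity_le hc hscale hp hb haN hab.le hbaN.le hf hx.ne hr
  calc _ ≤ ENNReal.ofReal ((2 * absorptionConst N c p b θ) ^ q) * G ^ (q - 1) * G := by
        rw [hGdef, ← lintegral_const_mul _ (measurable_gagliardoDensity hf)]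
        exact lintegral_mono_ae hpoint
    _ = _ := by
        rw [mul_assoc, rpow_sub_one_mul_self hq.le]

end Absorption

section HigherExponent

variable {X : Type u} {E : Type v} [MetricSpace X] [MeasurableSpace X] [PseudoMetricSpace E]
  {μ : Measure X} {f : X → E} {N c C p q a ε L : ℝ}

lemma dist_rpow_mul_setLIntegral_rpow_le (hp : 0 < p) (hN : 0 ≤ N) (hq : 1 ≤ q) {S : Set X}
    (hS : MeasurableSet S) {x y : X} (hxy : x ≠ y) (hfar : ∀ z ∈ S, dist x y ≤ L * dist x z)
    (hnear : ∀ z ∈ S, dist x z ≤ 2 * dist x y) :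
    ENNReal.ofReal (dist x y ^ (-N)) * (∫⁻ z in S, gagliardoKernel f p a x z ∂μ) ^ q ≤
      ENNReal.ofReal (2 ^ N) *
        (gagliardoDensity μ f p a x ^ (q - 1) * gagliardoTail μ f p (a + N) L x y) := by
  have hρ : 0 < dist x y := dist_pos.2 hxy
  set I := ∫⁻ z in S, gagliardoKernel f p a x z ∂μ
  have hdensity : I ≤ gagliardoDensity μ f p a x := setLIntegral_le_lintegral _ _
  have htail : I ≤ ENNReal.ofReal ((2 * dist x y) ^ N) * gagliardoTail μ f p (a + N) L x y := by
    refine (setLIntegral_gagliardoKernel_le hp (le_add_of_nonneg_right hN) hS hnear).trans ?_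
    rw [add_sub_cancel_left]
    gcongr
    exact lintegral_mono_set hfar
  calc ENNReal.ofReal (dist x y ^ (-N)) * I ^ q
      = ENNReal.ofReal (dist x y ^ (-N)) * (I ^ (q - 1) * I) := by
        rw [← rpow_sub_one_mul_self hq]
    _ ≤ ENNReal.ofReal (dist x y ^ (-N)) * (gagliardoDensity μ f p a x ^ (q - 1) *
          (ENNReal.ofReal ((2 * dist x y) ^ N) * gagliardoTail μ f p (a + N) L x y)) := by
        gcongr
    _ = ENNReal.ofReal (dist x y ^ (-N) * (2 * dist x y) ^ N) *
          (gagliardoDensity μ f p a x ^ (q - 1) * gagliardoTail μ f p (a + N) L x y) := by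
        rw [ENNReal.ofReal_mul (by positivity)]
        ring
    _ = _ := by
        rw [Real.mul_rpow two_pos.le hρ.le, mul_left_comm (_ ^ (-N)), ← Real.rpow_add hρ,
          neg_add_cancel, Real.rpow_zero, mul_one]

variable [OpensMeasurableSpace X] [SecondCountableTopology X]
  [MeasurableSpace E] [OpensMeasurableSpace E] [SecondCountableTopology E]

lemma lintegral_gagliardoDensity_rpow_mul_gagliardoTail_le [SFinite μ] (hp : 0 < p)
    (hf : Measurable f) (hL : 0 < L) (hq : 1 ≤ q)
    (hμ : ∀ x r, 0 < r → μ (Metric.closedBall x r) ≤ ENNReal.ofReal (C * r ^ N)) :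
    ∫⁻ x, ∫⁻ y, gagliardoDensity μ f p a x ^ (q - 1) * gagliardoTail μ f p (a + N) L x y ∂μ ∂μ ≤
      ENNReal.ofReal (C * L ^ N) * ∫⁻ x, gagliardoDensity μ f p a x ^ q ∂μ := by
  rw [← lintegral_const_mul' _ _ ENNReal.ofReal_ne_top]
  refine lintegral_mono fun x => ?_
  rw [lintegral_const_mul _ (measurable_uncurry_gagliardoTail hf).of_uncurry_left]
  grw [lintegral_gagliardoTail_le hp hf hL (hμ x)]
  rw [mul_left_comm, rpow_sub_one_mul_self hq]

lemma IsAhlforsRegular.gagliardoKernel_zero_le_dist_rpow_mul (hμ : IsAhlforsRegular μ N c C)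
    (hc : 0 < c) (hε : 0 < ε) (hεc : 4 * C * ε ^ N ≤ c) (hp : 0 < p) (ha : 0 ≤ a)
    (hf : Measurable f) {x y : X} (hxy : x ≠ y) :
    gagliardoKernel f p 0 x y ≤ ENNReal.ofReal (averagingConst c p * 2 ^ a * dist x y ^ (a - N)) *
      ((∫⁻ z in middleRegion ε x y (dist x y), gagliardoKernel f p a x z ∂μ) +
        ∫⁻ z in middleRegion ε x y (dist x y), gagliardoKernel f p a y z ∂μ) := by
  have hκ : 0 < averagingConst c p := averagingConst_pos hc p
  have hρ : 0 < dist x y := dist_pos.2 hxy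
  have hx := setLIntegral_gagliardoKernel_le (f := f) (μ := μ) hp ha
    (measurableSet_middleRegion ε x y _) fun z hz =>
      (dist_le_of_mem_middleRegion hz).trans (le_mul_of_one_le_left hρ.le one_le_two)
  have hy := setLIntegral_gagliardoKernel_le (f := f) (μ := μ) hp ha
    (measurableSet_middleRegion ε x y _) fun z hz =>
      (dist_le_add_of_mem_middleRegion hz).trans (two_mul _).ge
  grw [hμ.gagliardoKernel_zero_le hc hε hεc hp hf hρ le_rfl, hx, hy, ← mul_add, ← mul_assoc,
    ← ENNReal.ofReal_mul (by positivity)]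
  refine le_of_eq ?_
  congr 2
  rw [sub_zero, Real.mul_rpow two_pos.le hρ.le, Real.rpow_sub hρ, Real.rpow_neg hρ.le]
  field_simp

lemma IsAhlforsRegular.gagliardoKernel_mul_exponent_le_setLIntegral
    (hμ : IsAhlforsRegular μ N c C) (hc : 0 < c) (hε : 0 < ε) (hεc : 4 * C * ε ^ N ≤ c)
    (hp : 0 < p) (ha : 0 ≤ a) (hq : 1 ≤ q) (hf : Measurable f) {x y : X} (hxy : x ≠ y) :
    gagliardoKernel f (p * q) (N + (a - N) * q) x y ≤
      ENNReal.ofReal ((averagingConst c p * 2 ^ a) ^ q * 2 ^ (q - 1)) *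
        (ENNReal.ofReal (dist x y ^ (-N)) *
            (∫⁻ z in middleRegion ε x y (dist x y), gagliardoKernel f p a x z ∂μ) ^ q +
          ENNReal.ofReal (dist x y ^ (-N)) *
            (∫⁻ z in middleRegion ε x y (dist x y), gagliardoKernel f p a y z ∂μ) ^ q) := by
  have hq0 : 0 ≤ q := zero_le_one.trans hq
  have hκ : 0 < averagingConst c p := averagingConst_pos hc p
  have hρ : 0 < dist x y := dist_pos.2 hxy
  have hzero := hμ.gagliardoKernel_zero_le_dist_rpow_mul hc hε hεc hp ha hf hxy
  set Ix := ∫⁻ z in middleRegion ε x y (dist x y), gagliardoKernel f p a x z ∂μ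
  set Iy := ∫⁻ z in middleRegion ε x y (dist x y), gagliardoKernel f p a y z ∂μ
  calc gagliardoKernel f (p * q) (N + (a - N) * q) x y
      = ENNReal.ofReal (dist x y ^ (-(N + (a - N) * q))) * gagliardoKernel f p 0 x y ^ q :=
        gagliardoKernel_mul_exponent hq0 hρ
    _ ≤ ENNReal.ofReal (dist x y ^ (-(N + (a - N) * q))) *
          (ENNReal.ofReal (averagingConst c p * 2 ^ a * dist x y ^ (a - N)) * (Ix + Iy)) ^ q := by
        gcongr
    _ = ENNReal.ofReal ((averagingConst c p * 2 ^ a) ^ q) *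
          (ENNReal.ofReal (dist x y ^ (-N)) * (Ix + Iy) ^ q) := by
        rw [ENNReal.mul_rpow_of_nonneg _ _ hq0,
          ENNReal.ofReal_rpow_of_nonneg (by positivity) hq0, ← mul_assoc, ← mul_assoc,
          ← ENNReal.ofReal_mul (by positivity), ← ENNReal.ofReal_mul (by positivity),
          Real.mul_rpow (by positivity) (by positivity), ← Real.rpow_mul hρ.le, mul_left_comm,
          ← Real.rpow_add hρ]
        ring_nf
    _ ≤ ENNReal.ofReal ((averagingConst c p * 2 ^ a) ^ q) * (ENNReal.ofReal (dist x y ^ (-N)) *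
          (ENNReal.ofReal (2 ^ (q - 1)) * (Ix ^ q + Iy ^ q))) := by
        gcongr
        rw [← ENNReal.ofReal_rpow_of_pos two_pos, ENNReal.ofReal_ofNat]
        exact ENNReal.rpow_add_le_mul_rpow_add_rpow _ _ hq
    _ = _ := by
        rw [ENNReal.ofReal_mul (by positivity)]
        ring

lemma IsAhlforsRegular.gagliardoKernel_mul_exponent_le (hμ : IsAhlforsRegular μ N c C)
    (hc : 0 < c) (hε : 0 < ε) (hεc : 4 * C * ε ^ N ≤ c) (hp : 0 < p) (hN : 0 ≤ N) (ha : 0 ≤ a)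
    (hq : 1 ≤ q) (hf : Measurable f) (x y : X) :
    gagliardoKernel f (p * q) (N + (a - N) * q) x y ≤
      ENNReal.ofReal ((averagingConst c p * 2 ^ a) ^ q * 2 ^ (q - 1) * 2 ^ N) *
        (gagliardoDensity μ f p a x ^ (q - 1) * gagliardoTail μ f p (a + N) ε⁻¹ x y +
          gagliardoDensity μ f p a y ^ (q - 1) * gagliardoTail μ f p (a + N) ε⁻¹ y x) := by
  rcases eq_or_ne x y with rfl | hxy
  · simp [gagliardoKernel_self (mul_pos hp (one_pos.trans_le hq))]
  have hκ : 0 < averagingConst c p := averagingConst_pos hc p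
  have hS : MeasurableSet (middleRegion ε x y (dist x y)) := measurableSet_middleRegion ε x y _
  have hx := dist_rpow_mul_setLIntegral_rpow_le (f := f) (μ := μ) (a := a) (L := ε⁻¹) hp hN hq hS
    hxy (fun z hz => (le_inv_mul_iff₀ hε).2 (mul_le_dist_left_of_mem_middleRegion hz))
    fun z hz => (dist_le_of_mem_middleRegion hz).trans
      (le_mul_of_one_le_left dist_nonneg one_le_two)
  have hy := dist_rpow_mul_setLIntegral_rpow_le (f := f) (μ := μ) (a := a) (L := ε⁻¹) hp hN hq hS
    hxy.symm
    (fun z hz => (le_inv_mul_iff₀ hε).2 <|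
      (dist_comm y x).symm ▸ mul_le_dist_right_of_mem_middleRegion hz)
    fun z hz => (dist_le_add_of_mem_middleRegion hz).trans (by rw [dist_comm y x, two_mul])
  rw [dist_comm y x] at hy
  grw [hμ.gagliardoKernel_mul_exponent_le_setLIntegral hc hε hεc hp ha hq hf hxy, hx, hy,
    ← mul_add, ← mul_assoc, ← ENNReal.ofReal_mul (by positivity)]

lemma IsAhlforsRegular.lintegral_gagliardoDensity_mul_exponent_le [SFinite μ]
    (hμ : IsAhlforsRegular μ N c C) (hc : 0 < c) (hε : 0 < ε) (hεc : 4 * C * ε ^ N ≤ c)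
    (hp : 0 < p) (hN : 0 ≤ N) (ha : 0 ≤ a) (hq : 1 ≤ q) (hf : Measurable f) :
    ∫⁻ x, gagliardoDensity μ f (p * q) (N + (a - N) * q) x ∂μ ≤
      ENNReal.ofReal ((averagingConst c p * 2 ^ a) ^ q * 2 ^ (q - 1) * 2 ^ N) *
        (2 * (ENNReal.ofReal (C * ε⁻¹ ^ N) * ∫⁻ x, gagliardoDensity μ f p a x ^ q ∂μ)) := by
  set W : X → X → ℝ≥0∞ := fun x y =>
    gagliardoDensity μ f p a x ^ (q - 1) * gagliardoTail μ f p (a + N) ε⁻¹ x y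
  have hW : Measurable (Function.uncurry W) :=
    (((measurable_gagliardoDensity hf).pow_const _).comp measurable_fst).mul
      (measurable_uncurry_gagliardoTail hf)
  have hswap : ∫⁻ x, ∫⁻ y, W y x ∂μ ∂μ = ∫⁻ x, ∫⁻ y, W x y ∂μ ∂μ :=
    lintegral_lintegral_swap (hW.comp measurable_swap).aemeasurable
  have hWint : ∫⁻ x, ∫⁻ y, W x y ∂μ ∂μ ≤
      ENNReal.ofReal (C * ε⁻¹ ^ N) * ∫⁻ x, gagliardoDensity μ f p a x ^ q ∂μ :=
    lintegral_gagliardoDensity_rpow_mul_gagliardoTail_le hp hf (inv_pos.2 hε) hq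
      hμ.measure_closedBall_le
  calc _ ≤ ∫⁻ x, ∫⁻ y, ENNReal.ofReal ((averagingConst c p * 2 ^ a) ^ q * 2 ^ (q - 1) * 2 ^ N) *
          (W x y + W y x) ∂μ ∂μ :=
        lintegral_mono fun x => lintegral_mono fun y =>
          hμ.gagliardoKernel_mul_exponent_le hc hε hεc hp hN ha hq hf x y
    _ = ENNReal.ofReal ((averagingConst c p * 2 ^ a) ^ q * 2 ^ (q - 1) * 2 ^ N) *
          (∫⁻ x, ∫⁻ y, W x y ∂μ ∂μ + ∫⁻ x, ∫⁻ y, W y x ∂μ ∂μ) := by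
        have hinner : Measurable fun x => ∫⁻ y, W x y ∂μ := hW.lintegral_prod_right'
        simp only [lintegral_const_mul' _ _ ENNReal.ofReal_ne_top,
          lintegral_add_left hW.of_uncurry_left, lintegral_add_left hinner]
    _ ≤ _ := by
        rw [hswap, ← two_mul]
        gcongr

end HigherExponent

section Embedding

lemma rpow_one_div_mul_le {A p q : ℝ} (hA : 0 ≤ A) (hp : 0 < p) (hq : 0 < q) {X G : ℝ≥0∞}
    (h : X ≤ ENNReal.ofReal A * G ^ q) :
    X ^ (1 / (p * q)) ≤ ENNReal.ofReal (A ^ (1 / (p * q))) * G ^ (1 / p) := by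
  have hpq : 0 < 1 / (p * q) := by positivity
  calc X ^ (1 / (p * q)) ≤ (ENNReal.ofReal A * G ^ q) ^ (1 / (p * q)) := by gcongr
    _ = ENNReal.ofReal (A ^ (1 / (p * q))) * G ^ (q * (1 / (p * q))) := by
        rw [ENNReal.mul_rpow_of_nonneg _ _ hpq.le, ENNReal.ofReal_rpow_of_nonneg hA hpq.le,
          ← ENNReal.rpow_mul]
    _ = _ := by
        congr 2
        field_simp

lemma eq_mul_div_of_sub_div_eq_sub_div {N s t p pstar : ℝ} (hN : 0 < N) (hp : 0 < p)
    (hpstar : 0 < pstar) (hrel : s - N / pstar = t - N / p) :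
    (t - s) * p < N ∧ pstar = p * (N / (N - (t - s) * p)) := by
  have hratio : N - (t - s) * p = N * p / pstar := by
    rw [mul_div_right_comm, show N / pstar = N / p - (t - s) by linarith]
    field_simp
  refine ⟨sub_pos.1 (hratio ▸ by positivity), ?_⟩
  rw [hratio]
  field_simp

lemma exists_lintegral_gagliardoDensity_rpow_le {N c C p a b : ℝ} (hN : 0 < N) (hc : 0 < c)
    (hC : 0 < C) (hp : 0 < p) (haN : N < a) (hab : a < b) (hbaN : b - a < N) :
    ∃ K : ℝ, 0 < K ∧ ∀ (X : Type u) [MetricSpace X] [MeasurableSpace X] [OpensMeasurableSpace X]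
      [SecondCountableTopology X] (μ : Measure X), IsAhlforsRegular μ N c C →
      ∀ (E : Type v) [PseudoMetricSpace E] [MeasurableSpace E] [OpensMeasurableSpace E]
        [SecondCountableTopology E] (f : X → E), Measurable f →
        ∫⁻ x, gagliardoDensity μ f p a x ^ (N / (N - (b - a))) ∂μ ≤
          ENNReal.ofReal K * (∫⁻ x, gagliardoDensity μ f p b x ∂μ) ^ (N / (N - (b - a))) := by
  obtain ⟨ε, θ, hscale⟩ := exists_admissibleScales (p := p) hN hc hC haN
  have hκ : 0 < averagingConst c p := averagingConst_pos hc p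
  have hθ := hscale.θ_pos
  have hK : 0 < absorptionConst N c p b θ := by unfold absorptionConst; positivity
  refine ⟨(2 * absorptionConst N c p b θ) ^ (N / (N - (b - a))), by positivity,
    fun X _ _ _ _ μ hμ E _ _ _ _ f hf => ?_⟩
  have := hμ.isLocallyFiniteMeasure
  exact hμ.lintegral_gagliardoDensity_rpow_le hc hscale hp (by linarith) (by linarith) hab hbaN hf

lemma exists_lintegral_gagliardoDensity_mul_exponent_le {N c C p q a : ℝ} (hN : 0 < N)
    (hc : 0 < c) (hC : 0 < C) (hp : 0 < p) (ha : 0 ≤ a) (hq : 1 ≤ q) :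
    ∃ K : ℝ, 0 < K ∧ ∀ (X : Type u) [MetricSpace X] [MeasurableSpace X] [OpensMeasurableSpace X]
      [SecondCountableTopology X] (μ : Measure X), IsAhlforsRegular μ N c C →
      ∀ (E : Type v) [PseudoMetricSpace E] [MeasurableSpace E] [OpensMeasurableSpace E]
        [SecondCountableTopology E] (f : X → E), Measurable f →
        ∫⁻ x, gagliardoDensity μ f (p * q) (N + (a - N) * q) x ∂μ ≤
          ENNReal.ofReal K * ∫⁻ x, gagliardoDensity μ f p a x ^ q ∂μ := by
  obtain ⟨ε, hε, -, hεc⟩ := exists_mul_rpow_le (mul_pos four_pos hC) hN hc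
  have hκ : 0 < averagingConst c p := averagingConst_pos hc p
  refine ⟨(averagingConst c p * 2 ^ a) ^ q * 2 ^ (q - 1) * 2 ^ N * (2 * (C * ε⁻¹ ^ N)),
    by positivity, fun X _ _ _ _ μ hμ E _ _ _ _ f hf => ?_⟩
  have := hμ.isLocallyFiniteMeasure
  refine (hμ.lintegral_gagliardoDensity_mul_exponent_le hc hε hεc hp hN.le ha hq hf).trans_eq ?_
  rw [← mul_assoc 2, ← mul_assoc, ← ENNReal.ofReal_ofNat 2, ← ENNReal.ofReal_mul two_pos.le,
    ← ENNReal.ofReal_mul (by positivity)]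

theorem exists_gagliardoSeminorm_le {N c C s t p pstar : ℝ} (hN : 0 < N) (hc : 0 < c)
    (hC : 0 < C) (hs : 0 < s) (hst : s < t) (hp : 0 < p) (hpstar : 0 < pstar)
    (hrel : s - N / pstar = t - N / p) :
    ∃ K : ℝ, 0 < K ∧ ∀ (X : Type u) [MetricSpace X] [MeasurableSpace X] [OpensMeasurableSpace X]
      [SecondCountableTopology X] (μ : Measure X), IsAhlforsRegular μ N c C →
      ∀ (E : Type v) [PseudoMetricSpace E] [MeasurableSpace E] [OpensMeasurableSpace E]
        [SecondCountableTopology E] (f : X → E), Measurable f →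
        gagliardoSeminorm μ N s pstar f ≤ ENNReal.ofReal K * gagliardoSeminorm μ N t p f ∧
        (∫⁻ x, gagliardoDensity μ f p (N + s * p) x ^ (pstar / p) ∂μ) ^ (1 / pstar) ≤
          ENNReal.ofReal K * gagliardoSeminorm μ N t p f := by
  obtain ⟨hgain, hpq⟩ := eq_mul_div_of_sub_div_eq_sub_div hN hp hpstar hrel
  have hba : N + t * p - (N + s * p) = (t - s) * p := by ring
  have hst' : 0 < (t - s) * p := mul_pos (sub_pos.2 hst) hp
  have hsp : 0 < s * p := mul_pos hs hp
  obtain ⟨A, hA, hmixed⟩ := exists_lintegral_gagliardoDensity_rpow_le.{u, v} hN hc hC hp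
    (lt_add_of_pos_right N hsp) (b := N + t * p) (by linarith) (by linarith)
  rw [hba] at hmixed
  have hq : 1 < N / (N - (t - s) * p) := (one_lt_div (sub_pos.2 hgain)).2 (sub_lt_self N hst')
  set q := N / (N - (t - s) * p)
  obtain ⟨B, hB, hdouble⟩ := exists_lintegral_gagliardoDensity_mul_exponent_le.{u, v} hN hc hC hp
    (by positivity : 0 ≤ N + s * p) hq.le
  have hpstar_exp : N + (N + s * p - N) * q = N + s * (p * q) := by ring
  rw [hpstar_exp] at hdouble
  subst hpq
  rw [mul_div_cancel_left₀ q hp.ne']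
  refine ⟨max ((B * A) ^ (1 / (p * q))) (A ^ (1 / (p * q))), by positivity,
    fun X _ _ _ _ μ hμ E _ _ _ _ f hf => ⟨?_, ?_⟩⟩
  · grw [← le_max_left]
    refine rpow_one_div_mul_le (by positivity) hp (by linarith) ((hdouble X μ hμ E f hf).trans ?_)
    grw [hmixed X μ hμ E f hf, ENNReal.ofReal_mul hB.le, mul_assoc]
  · grw [← le_max_right]
    exact rpow_one_div_mul_le hA.le hp (by linarith) (hmixed X μ hμ E f hf)

end Embedding

section Plump

variable {X : Type u} [MetricSpace X] {A : Set X}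

/-- A set is plump if every ball centred at one of its points, of radius at most its diameter,
contains a ball of half the radius inside the set. -/
def IsPlump (A : Set X) : Prop :=
  ∀ x ∈ A, ∀ r, 0 < r → ENNReal.ofReal r ≤ Metric.ediam A →
    ∃ w, Metric.ball w (r / 2) ⊆ Metric.ball x r ∩ A

lemma isPlump_univ : IsPlump (Set.univ : Set X) := fun x _ _ hr _ =>
  ⟨x, Set.subset_inter (Metric.ball_subset_ball (half_le_self hr.le)) (Set.subset_univ _)⟩

lemma isPlump_ball {V : Type u} [NormedAddCommGroup V] [NormedSpace ℝ V] (z : V) (R : ℝ) :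
    IsPlump (Metric.ball z R) := by
  intro x hx r hr hrA
  have hrR : r ≤ 2 * R := by
    have hR : 0 < R := Metric.pos_of_mem_ball hx
    rw [← ENNReal.ofReal_le_ofReal_iff (by positivity), ENNReal.ofReal_mul two_pos.le,
      ENNReal.ofReal_ofNat]
    exact hrA.trans (Metric.eball_ofReal (x := z) ▸ Metric.ediam_eball_le)
  obtain ⟨w, hxw, hwz⟩ := exists_dist_le_le (x := x) (z := z) (half_pos hr).le
    (by linarith : 0 ≤ R - r / 2) (by linarith [Metric.mem_ball.1 hx])
  exact ⟨w, Set.subset_inter (Metric.ball_subset_ball' (by linarith [dist_comm x w]))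
    (Metric.ball_subset_ball' (by linarith))⟩

variable [MeasurableSpace X] {μ : Measure X} {N c C : ℝ}

lemma IsAhlforsRegular.comap_subtype (hμ : IsAhlforsRegular μ N c C) (hA : MeasurableSet A)
    (hplump : IsPlump A) :
    IsAhlforsRegular (μ.comap ((↑) : A → X)) N (c * 2⁻¹ ^ N) C where
  measure_closedBall_le x r hr := by
    rw [comap_subtype_coe_apply hA, Subtype.image_closedBall]
    exact (measure_mono Set.inter_subset_left).trans (hμ.measure_closedBall_le x r hr)
  le_measure_ball x r hr hrA := by
    have hdiam : Metric.ediam (Set.univ : Set A) = Metric.ediam A := by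
      rw [← isometry_subtype_coe.ediam_range, Subtype.range_coe]
    obtain ⟨w, hw⟩ := hplump x x.2 r hr (hrA.trans hdiam.le)
    rw [comap_subtype_coe_apply hA, Subtype.image_ball, mul_assoc,
      ← Real.mul_rpow (by positivity) hr.le, inv_mul_eq_div]
    refine (hμ.le_measure_ball w _ (half_pos hr) ?_).trans (measure_mono hw)
    calc ENNReal.ofReal (r / 2) ≤ ENNReal.ofReal r := by gcongr; exact half_le_self hr.le
      _ ≤ Metric.ediam A := hrA.trans hdiam.le
      _ ≤ Metric.ediam Set.univ := Metric.ediam_mono (Set.subset_univ A)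

variable {E : Type v} [PseudoMetricSpace E]

lemma gagliardoDensity_comap_subtype (hA : MeasurableSet A) (f : X → E) (p a : ℝ) (x : A) :
    gagliardoDensity (μ.comap ((↑) : A → X)) (fun y : A => f y) p a x =
      gagliardoDensity (μ.restrict A) f p a x :=
  lintegral_subtype_comap hA (gagliardoKernel f p a x)

lemma gagliardoSeminorm_comap_subtype (hA : MeasurableSet A) (f : X → E) (N σ p : ℝ) :
    gagliardoSeminorm (μ.comap ((↑) : A → X)) N σ p (fun y : A => f y) =
      gagliardoSeminorm (μ.restrict A) N σ p f := by
  simp only [gagliardoSeminorm, gagliardoDensity_comap_subtype hA]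
  rw [lintegral_subtype_comap hA]

end Plump

theorem stmt8_general {N c C s t p pstar : ℝ} (hN : 0 < N) (hc : 0 < c) (hC : 0 < C)
    (hs : 0 < s) (hst : s < t) (hp : 0 < p) (hpstar : 0 < pstar)
    (hrel : s - N / pstar = t - N / p) :
    ∃ K : ℝ, 0 < K ∧ ∀ (X : Type u) [MetricSpace X] [MeasurableSpace X] [OpensMeasurableSpace X]
      [SecondCountableTopology X] (μ : Measure X), IsAhlforsRegular μ N c C →
      ∀ A : Set X, MeasurableSet A → IsPlump A →
      ∀ (E : Type v) [PseudoMetricSpace E] [MeasurableSpace E] [OpensMeasurableSpace E]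
        [SecondCountableTopology E] (f : X → E), Measurable f →
        gagliardoSeminorm (μ.restrict A) N s pstar f ≤
          ENNReal.ofReal K * gagliardoSeminorm (μ.restrict A) N t p f ∧
        (∫⁻ x in A, gagliardoDensity (μ.restrict A) f p (N + s * p) x ^ (pstar / p) ∂μ) ^
            (1 / pstar) ≤
          ENNReal.ofReal K * gagliardoSeminorm (μ.restrict A) N t p f := by
  obtain ⟨K, hK, h⟩ := exists_gagliardoSeminorm_le.{u, v} hN
    (by positivity : 0 < c * 2⁻¹ ^ N) hC hs hst hp hpstar hrel
  refine ⟨K, hK, fun X _ _ _ _ μ hμ A hA hplump E _ _ _ _ f hf => ?_⟩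
  have hbound := h A _ (hμ.comap_subtype hA hplump) E _ (hf.comp measurable_subtype_coe)
  simp only [Function.comp_def, gagliardoSeminorm_comap_subtype hA,
    gagliardoDensity_comap_subtype hA] at hbound
  rwa [lintegral_subtype_comap hA
    (fun x => gagliardoDensity (μ.restrict A) f p (N + s * p) x ^ (pstar / p))] at hbound

section Euclidean

lemma isAhlforsRegular_addHaar {V : Type u} [NormedAddCommGroup V] [NormedSpace ℝ V]
    [FiniteDimensional ℝ V] [MeasurableSpace V] [BorelSpace V] (μ : Measure V)
    [μ.IsAddHaarMeasure] :
    IsAhlforsRegular μ (Module.finrank ℝ V) (μ.real (Metric.ball 0 1))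
      (μ.real (Metric.ball 0 1)) where
  measure_closedBall_le x r hr := by
    rw [Measure.addHaar_closedBall μ x hr.le, mul_comm (μ.real _), Real.rpow_natCast,
      ENNReal.ofReal_mul (by positivity), ofReal_measureReal]
  le_measure_ball x r hr _ := by
    rw [Measure.addHaar_ball_of_pos μ x hr, mul_comm (μ.real _), Real.rpow_natCast,
      ENNReal.ofReal_mul (by positivity), ofReal_measureReal]

lemma gagliardoDensity_eq_lintegral_norm {n : ℕ} (μ : Measure (Euc n)) (f : Euc n → ℝ) (p a : ℝ)
    (x : Euc n) :
    gagliardoDensity μ f p a x = ∫⁻ y, ENNReal.ofReal (|f x - f y| ^ p / ‖x - y‖ ^ a) ∂μ := by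
  simp only [gagliardoDensity, gagliardoKernel, dist_eq_norm, Real.norm_eq_abs]

lemma gagliardoSeminorm_volume_restrict {n : ℕ} (σ p : ℝ) (A : Set (Euc n)) (f : Euc n → ℝ) :
    gagliardoSeminorm (volume.restrict A) n σ p f = gagliardo n σ p A f := by
  simp only [gagliardo, gagliardoSeminorm, gagliardoDensity_eq_lintegral_norm]

lemma exists_gagliardo_le_of_isPlump {n : ℕ} (hn : 0 < n) {s t p pstar : ℝ} (hs : 0 < s)
    (hst : s < t) (hp : 0 < p) (hpstar : 0 < pstar) (hrel : s - n / pstar = t - n / p) :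
    ∃ K : ℝ, 0 < K ∧ ∀ A : Set (Euc n), MeasurableSet A → IsPlump A →
      ∀ f : Euc n → ℝ, Measurable f →
        gagliardo n s pstar A f ≤ ENNReal.ofReal K * gagliardo n t p A f ∧
        (∫⁻ x in A, (∫⁻ y in A, ENNReal.ofReal (|f x - f y| ^ p / ‖x - y‖ ^ ((n : ℝ) + s * p)))
            ^ (pstar / p)) ^ (1 / pstar) ≤
          ENNReal.ofReal K * gagliardo n t p A f := by
  let ω := volume.real (Metric.ball (0 : Euc n) 1)
  have hω : 0 < ω :=
    ENNReal.toReal_pos (Metric.measure_ball_pos _ _ one_pos).ne' measure_ball_lt_top.ne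
  have hvol : IsAhlforsRegular (volume : Measure (Euc n)) n ω ω := by
    simpa only [finrank_euclideanSpace_fin] using
      isAhlforsRegular_addHaar (volume : Measure (Euc n))
  obtain ⟨K, hK, h⟩ := stmt8_general (Nat.cast_pos.2 hn) hω hω hs hst hp hpstar hrel
  simp only [← gagliardoSeminorm_volume_restrict, ← gagliardoDensity_eq_lintegral_norm]
  exact ⟨K, hK, fun A hA hplump f hf => h (Euc n) volume hvol A hA hplump ℝ f hf⟩

end Euclidean

/-- Sobolev-type embeddings for Gagliardo seminorms, on `ℝⁿ` and on balls. -/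
theorem stmt8 (n : ℕ) (hn : 1 ≤ n) (s t p pstar : ℝ)
    (hs : 0 < s) (hst : s < t) (ht : t < 1) (hp : 1 < p) (hpstar : 1 < pstar)
    (hrel : s - n / pstar = t - n / p) :
    ∃ C : ℝ, 0 < C ∧
      -- (1) and (2): on all of ℝⁿ
      (∀ f : Euc n → ℝ, Measurable f →
        gagliardo n s pstar Set.univ f ≤ ENNReal.ofReal C * gagliardo n t p Set.univ f) ∧
      (∀ f : Euc n → ℝ, Measurable f →
        (∫⁻ x, (∫⁻ y, ENNReal.ofReal (|f x - f y| ^ p / ‖x - y‖ ^ ((n : ℝ) + s * p)))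
              ^ (pstar / p)) ^ (1 / pstar)
          ≤ ENNReal.ofReal C * gagliardo n t p Set.univ f) ∧
      -- (3) and (4): on balls, with the same constant
      (∀ (z : Euc n) (R : ℝ), 0 < R → ∀ f : Euc n → ℝ, Measurable f →
        gagliardo n s pstar (Metric.ball z R) f
          ≤ ENNReal.ofReal C * gagliardo n t p (Metric.ball z R) f) ∧
      (∀ (z : Euc n) (R : ℝ), 0 < R → ∀ f : Euc n → ℝ, Measurable f →
        (∫⁻ x in Metric.ball z R,
            (∫⁻ y in Metric.ball z R,
              ENNReal.ofReal (|f x - f y| ^ p / ‖x - y‖ ^ ((n : ℝ) + s * p)))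
              ^ (pstar / p)) ^ (1 / pstar)
          ≤ ENNReal.ofReal C * gagliardo n t p (Metric.ball z R) f) := by
  obtain ⟨K, hK, h⟩ := exists_gagliardo_le_of_isPlump hn hs hst (one_pos.trans hp)
    (one_pos.trans hpstar) hrel
  have huniv := h Set.univ .univ isPlump_univ
  rw [Measure.restrict_univ] at huniv
  have hball z R := h (Metric.ball z R) measurableSet_ball (isPlump_ball z R)
  exact ⟨K, hK, fun f hf => (huniv f hf).1, fun f hf => (huniv f hf).2,
    fun z R _ f hf => (hball z R f hf).1, fun z R _ f hf => (hball z R f hf).2⟩
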